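/- Two-row formula for spin Green polynomials: for a strict partition (k, n−k) with k > n−k > 0 and μ ∈ OP_n, Y^{(k,n−k)}_μ(t) = (2(t−1)/(t+1))·([D_t(μ)t^{−k}]_+ − [D_t(μ)t^{−k}]_+|_{t=−1}) + D^{(n−k)}(μ), where [f]_+ denotes the polynomial part (nonnegative powers of t) of the Laurent polynomial f, D_t(μ) = ∑_i D^{(i)}(μ)t^i, and D^{(i)}(μ) is the number of subpartitions of μ of weight i. -/

import Mathlib

open MvPolynomial Finset

noncomputable section
open scoped Classical

/-- Index set of odd positive integers (odd power sums). -/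
abbrev OddIdx := {n : ℕ // Odd n}

/-- The ring Γ = F[p₁, p₃, p₅, …]. -/
abbrev Gam (F : Type) [Field F] := MvPolynomial OddIdx F

variable {F : Type} [Field F] [CharZero F]

/-- The power sum p_n (a variable for odd n, 0 otherwise). -/
def pvar (F : Type) [Field F] (n : ℕ) : Gam F := if h : Odd n then X ⟨n, h⟩ else 0

/-- p_ρ = ∏ p_{ρᵢ}. -/
def pprod (F : Type) [Field F] (ρ : Multiset ℕ) : Gam F := (ρ.map (pvar F)).prod

/-- ∂/∂p_n. -/
def pder (n : ℕ) (f : Gam F) : Gam F := if h : Odd n then pderiv (⟨n, h⟩ : OddIdx) f else 0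

/-- Composition of partial derivatives indexed by a multiset. -/
def Dmult (ρ : Multiset ℕ) (f : Gam F) : Gam F := ρ.toList.foldr pder f

/-- ∏ᵢ mᵢ(ρ)!. -/
def aut (ρ : Multiset ℕ) : ℕ := ρ.toFinset.prod fun i => Nat.factorial (ρ.count i)

/-- z_ρ = ∏ᵢ i^{mᵢ(ρ)} mᵢ(ρ)!. -/
def zp (ρ : Multiset ℕ) : ℕ := ρ.prod * aut ρ

/-- Coefficient of z^m in exp(∑ₙ c_n p_n zⁿ). -/
def crea (c : ℕ → F) (m : ℤ) : Gam F :=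
  if 0 ≤ m then
    ∑ ρ : Nat.Partition m.toNat, (((ρ.parts.map c).prod) / (aut ρ.parts : F)) • pprod F ρ.parts
  else 0

/-- Coefficient of z^{-k} in exp(∑ₙ d_n (∂/∂p_n) z^{-n}), applied to f. -/
def annih (d : ℕ → F) (k : ℕ) (f : Gam F) : Gam F :=
  ∑ ρ : Nat.Partition k, (((ρ.parts.map d).prod) / (aut ρ.parts : F)) • Dmult ρ.parts f

/-- A bound beyond which all annihilation components kill f. -/
def bnd (f : Gam F) : ℕ := (f.totalDegree + 1) * ((f.vars.sup fun v => v.1) + 1) + 1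

/-- Coefficient of z^m in exp(∑ c_n p_n zⁿ)·exp(∑ d_n ∂/∂p_n z^{-n}), applied to f. -/
def vop (c d : ℕ → F) (m : ℤ) (f : Gam F) : Gam F :=
  ∑ k ∈ Finset.range (bnd f), crea c (m + k) * annih d k f

/-- c_n = 2/n for odd n: the creation coefficients for Schur's Q-functions. -/
def cQ (F : Type) [Field F] : ℕ → F := fun n => if Odd n then 2 / (n : F) else 0

/-- d_n = -1 for odd n: annihilation coefficients of Q(z). -/
def dQ (F : Type) [Field F] : ℕ → F := fun n => if Odd n then (-1 : F) else 0

/-- The component Q_m of the vertex operator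
  Q(z) = exp(∑_{n odd} (2/n) pₙ zⁿ) exp(-∑_{n odd} (∂/∂pₙ) z^{-n}). -/
def Qop (m : ℤ) (f : Gam F) : Gam F := vop (cQ F) (dQ F) m f

/-- The one-row Schur Q-function q_m (with q_m = 0 for m < 0, q₀ = 1). -/
def qel (F : Type) [Field F] [CharZero F] (m : ℤ) : Gam F := crea (cQ F) m

/-- Q_λ·1 = Q_{λ₁}⋯Q_{λ_l}·1. -/
def Qelem (F : Type) [Field F] [CharZero F] (l : List ℕ) : Gam F :=
  l.foldr (fun a g => Qop (a : ℤ) g) 1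

/-- The bilinear form on Γ with ⟨p_λ, p_μ⟩ = 2^{-ℓ(λ)} δ_{λμ} z_λ. -/
def formQ (f g : Gam F) : F :=
  ∑ m ∈ f.support, f.coeff m * g.coeff m *
    ((m.prod fun i k => (i.1 : F) ^ k * (Nat.factorial k : F)) / 2 ^ (m.sum fun _ k => k))

end

noncomputable section
open scoped Classical

/-- The coefficient field ℚ(t). -/
abbrev FF := RatFunc ℚ

instance : CharZero FF :=
  charZero_of_injective_algebraMap (RatFunc.algebraMap_injective ℚ)

/-- The parameter t. -/
def tt : FF := RatFunc.X

/-- Annihilation coefficients d_n = tⁿ - 1 (n odd) of G(z). -/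
def dG : ℕ → FF := fun n => if Odd n then tt ^ n - 1 else 0

/-- Creation coefficients 2(tⁿ-1)/n (n odd) of G*(z). -/
def cGs : ℕ → FF := fun n => if Odd n then 2 * (tt ^ n - 1) / (n : FF) else 0

/-- Annihilation coefficients d_n = 1 (n odd) of G*(z). -/
def dGs : ℕ → FF := fun n => if Odd n then (1 : FF) else 0

/-- The component G_m of G(z) = exp(∑(2/n)pₙzⁿ)exp(∑(tⁿ-1)(∂/∂pₙ)z^{-n}). -/
def Gop (m : ℤ) (f : Gam FF) : Gam FF := vop (cQ FF) dG m f

/-- The component G*_m (coefficient of z^{-m}) of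
  G*(z) = exp(∑(2(tⁿ-1)/n)pₙzⁿ)exp(∑(∂/∂pₙ)z^{-n}). -/
def Gstar (m : ℤ) (f : Gam FF) : Gam FF := vop cGs dGs (-m) f

/-- G_λ·1 for a list of nonnegative parts. -/
def Gelem (l : List ℕ) : Gam FF := l.foldr (fun a g => Gop (a : ℤ) g) 1

/-- G_λ·1 for a list of integer indices. -/
def GelemZ (l : List ℤ) : Gam FF := l.foldr (fun a g => Gop a g) 1

/-- The Q-Kostka polynomial L_{λμ}(t) = 2^{-ℓ(λ)}⟨G_μ·1, Q_λ·1⟩. -/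
def Lpoly (l m : List ℕ) : FF := formQ (Gelem m) (Qelem FF l) / 2 ^ l.length

/-- The spin Green polynomial Y^λ_μ(t) = ⟨G_λ(x;t), p_μ⟩. -/
def Ypoly (l : List ℕ) (M : Multiset ℕ) : FF := formQ (Gelem l) (pprod FF M)

/-- z_ρ(t) = z_ρ ∏ⱼ (1 - t^{ρⱼ})⁻¹. -/
def zpt (ρ : Multiset ℕ) : FF := (zp ρ : FF) / (ρ.map fun j => 1 - tt ^ j).prod

/-- The adjoint power sum operator p*_m = (m/2) ∂/∂p_m. -/
def pstar (m : ℕ) (f : Gam FF) : Gam FF := ((m : FF) / 2) • pder m f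

/-- n(λ) = ∑ᵢ (i-1)λᵢ. -/
def nstat (l : List ℕ) : ℕ := ∑ i ∈ Finset.range l.length, i * l.getD i 0

/-- Dominance order on partitions (as decreasing lists), including equal weights. -/
def domin (a b : List ℕ) : Prop := a.sum = b.sum ∧ ∀ i, (b.take i).sum ≤ (a.take i).sum

/-- The parts of a `Nat.Partition` as a decreasingly sorted list. -/
def listOf {n : ℕ} (ρ : n.Partition) : List ℕ := (ρ.parts.sort (· ≤ ·)).reverse

/-- The i-th part (1-indexed by position in list, 0 beyond the length). -/
def pt (l : List ℕ) (i : ℕ) : ℕ := l.getD i 0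

/-- ξ/ν is a horizontal strip: ν ⊆ ξ and ξ_{i+1} ≤ ν_i for all i. -/
def HStrip (ξ ν : List ℕ) : Prop := ∀ i, pt ν i ≤ pt ξ i ∧ pt ξ (i + 1) ≤ pt ν i

/-- The strip ξ/ν has a box in column c. -/
def boxcol (ξ ν : List ℕ) (c : ℕ) : Prop := ∃ i < ξ.length, pt ν i < c ∧ c ≤ pt ξ i

/-- a(ξ/ν): number of columns with a box of ξ/ν but none in the next column. -/
def acount (ξ ν : List ℕ) : ℕ :=
  ((Finset.Icc 1 (pt ξ 0)).filter fun c => boxcol ξ ν c ∧ ¬ boxcol ξ ν (c + 1)).card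

end

noncomputable section
open scoped Classical

/-- D_t(μ) = ∑_i D^{(i)}(μ) t^i as a polynomial in ℚ[t]. -/
def Dpoly (m : List ℕ) : Polynomial ℚ :=
  ∑ S : Finset (Fin m.length), Polynomial.X ^ (∑ j ∈ S, m.get j)

/-- The polynomial part [P·t^{-k}]_+ of P·t^{-k}. -/
def plusPart (k : ℕ) (P : Polynomial ℚ) : Polynomial ℚ :=
  ∑ j ∈ Finset.range (P.natDegree + 1),
    if k ≤ j then Polynomial.C (P.coeff j) * Polynomial.X ^ (j - k) else 0

/-!
`G(z)` acts on the generating series `Q(w) = ∑ q_m w^m = exp(∑_{n odd} (2/n) p_n w^n)` by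
multiplication by `Q(z)` and by a scalar series in `w/z`, because `∂/∂p_n` multiplies `Q(w)` by
`(2/n) w^n`. Hence `G_{(k,r)} = ∑_j e_j q_{k+j} q_{r-j}`, where
`∑ e_j x^j = exp(∑_{n odd} (2/n)(t^n - 1) x^n) = (1 - x)(1 + t x) / ((1 - t x)(1 + x))`.
Multiplication by `p_n` is adjoint to `(n/2) ∂/∂p_n`, a derivation sending `q_a` to `q_{a-n}`, so
`⟨q_a q_b, p_μ⟩` counts the ways of distributing the parts of `μ` between `a` and `b`, which is
`D^{(a)}(μ)`. The partial fraction expansion `e_j = δ_{j0} + 2(t-1)/(t+1) (t^j - (-1)^j)` then gives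
the polynomial part of `D_t(μ) t^{-k}` at `t` and at `-1`, while `δ_{j0}` contributes
`D^{(k)}(μ) = D^{(r)}(μ)`.
-/

theorem finsupp_prod_add_single_one {ι M : Type*} [CommMonoid M] (g : ι → ℕ → M)
    (hg : ∀ i, g i 0 = 1) (u : ι →₀ ℕ) (i : ι) :
    g i (u i) * (u + Finsupp.single i 1).prod g = g i (u i + 1) * u.prod g := by
  have hu := Finsupp.mul_prod_erase' u i g hg
  have hui := Finsupp.mul_prod_erase' (u + Finsupp.single i 1) i g hg
  rw [Finsupp.erase_add, Finsupp.erase_single, add_zero, Finsupp.add_apply,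
    Finsupp.single_eq_same] at hui
  rw [← hu, ← hui, mul_left_comm]

section Partitions

theorem aut_cons (i : ℕ) (s : Multiset ℕ) : aut (i ::ₘ s) = (s.count i + 1) * aut s := by
  have h := finsupp_prod_add_single_one (fun _ k => k.factorial) (fun _ => rfl) s.toFinsupp i
  rw [← Multiset.toFinsupp_singleton, ← Multiset.toFinsupp_add, Multiset.add_comm,
    Multiset.singleton_add, Multiset.toFinsupp_apply, Nat.factorial_succ,
    mul_comm (s.count i + 1), mul_assoc] at h
  exact mul_left_cancel₀ (Nat.factorial_ne_zero _) h

variable (F : Type*) [Field F] [CharZero F]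

theorem count_mul_inv_aut {i : ℕ} {s : Multiset ℕ} (hi : i ∈ s) :
    (s.count i : F) * (aut s : F)⁻¹ = (aut (s.erase i) : F)⁻¹ := by
  obtain ⟨u, rfl⟩ := Multiset.exists_cons_of_mem hi
  have hcount : (u.count i + 1 : F) ≠ 0 := by exact_mod_cast (u.count i).succ_ne_zero
  rw [Multiset.erase_cons_head, aut_cons, Multiset.count_cons_self]
  push_cast
  rw [mul_inv, mul_inv_cancel_left₀ hcount]

/- Removing a part `i` is a bijection from the partitions of `m` containing `i` to those of `m - i`;
it changes `aut` by the multiplicity of `i`, which is the number of ways to choose that part. -/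
theorem sum_partition_sum_erase_part {M : Type*} [AddCommMonoid M] [Module F M]
    (g : ℕ → Multiset ℕ → M) (m : ℕ) :
    ∑ ρ : m.Partition,
        (aut ρ.parts : F)⁻¹ • (ρ.parts.map fun i => g i (ρ.parts.erase i)).sum
      = ∑ i ∈ Icc 1 m, ∑ σ : (m - i).Partition, (aut σ.parts : F)⁻¹ • g i σ.parts := by
  have sum_over_values (ρ : m.Partition) :
      (aut ρ.parts : F)⁻¹ • (ρ.parts.map fun i => g i (ρ.parts.erase i)).sum
        = ∑ i ∈ Icc 1 m, if i ∈ ρ.parts then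
            (aut (ρ.parts.erase i) : F)⁻¹ • g i (ρ.parts.erase i) else 0 := by
    have hsub : ρ.parts.toFinset ⊆ Icc 1 m := fun i hi => by
      rw [Multiset.mem_toFinset] at hi
      exact mem_Icc.2 ⟨ρ.parts_pos hi, ρ.le_of_mem_parts hi⟩
    rw [Finset.sum_multiset_map_count, smul_sum, ← Finset.sum_subset hsub]
    · refine sum_congr rfl fun i hi => ?_
      rw [Multiset.mem_toFinset] at hi
      rw [if_pos hi, ← count_mul_inv_aut F hi, mul_comm, mul_smul, Nat.cast_smul_eq_nsmul]
    · intro i _ hi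
      rw [Multiset.mem_toFinset] at hi
      exact if_neg hi
  rw [sum_congr rfl fun ρ _ => sum_over_values ρ, sum_comm]
  refine sum_congr rfl fun i hi => ?_
  obtain ⟨hi1, him⟩ := mem_Icc.1 hi
  rw [← Finset.sum_filter, Finset.sum_subtype _ (p := fun ρ : m.Partition => i ∈ ρ.parts) (by simp)]
  exact Fintype.sum_equiv (Nat.Partition.partitionWithPartEquiv hi1 him) _ _ fun ρ => by simp

end Partitions

section ExpCoeff

theorem smul_multiset_prod {R A ι : Type*} [CommSemiring R] [CommSemiring A] [Algebra R A]
    (c : ι → R) (a : ι → A) (s : Multiset ι) :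
    (s.map c).prod • (s.map a).prod = (s.map fun i => c i • a i).prod := by
  induction s using Multiset.induction with
  | empty => simp
  | cons i s ih => simp only [Multiset.map_cons, Multiset.prod_cons, ← ih, smul_mul_smul_comm]

theorem derivation_multiset_prod {R A ι : Type*} [DecidableEq ι] [CommSemiring R]
    [CommSemiring A] [Algebra R A] (D : Derivation R A A) (a : ι → A) (s : Multiset ι) :
    D (s.map a).prod = (s.map fun i => ((s.erase i).map a).prod * D (a i)).sum := by
  induction s using Multiset.induction with
  | empty => simp
  | cons i s ih =>
    have hcons (j) (hj : j ∈ s) : (((i ::ₘ s).erase j).map a).prod * D (a j)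
        = a i * (((s.erase j).map a).prod * D (a j)) := by
      rw [Multiset.erase_cons_tail_of_mem hj, Multiset.map_cons, Multiset.prod_cons, mul_assoc]
    rw [Multiset.map_cons, Multiset.prod_cons, D.leibniz, ih, Multiset.map_cons, Multiset.sum_cons,
      Multiset.erase_cons_head, Multiset.map_congr rfl hcons, Multiset.sum_map_mul_left,
      smul_eq_mul, smul_eq_mul, add_comm]

variable (F : Type*) [Field F] {A : Type*} [CommRing A] [Algebra F A]

/-- The coefficient of `zᵐ` in `exp (∑_{n ≥ 1} aₙ zⁿ)`, expanded over the partitions of `m`. -/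
def expCoeff (a : ℕ → A) (m : ℕ) : A :=
  ∑ ρ : m.Partition, (aut ρ.parts : F)⁻¹ • (ρ.parts.map a).prod

theorem expCoeff_zero (a : ℕ → A) : expCoeff F a 0 = 1 := by
  simp [expCoeff, aut]

variable [CharZero F]

theorem derivation_expCoeff (D : Derivation F A A) (a : ℕ → A) (m : ℕ) :
    D (expCoeff F a m) = ∑ i ∈ Icc 1 m, expCoeff F a (m - i) * D (a i) := by
  simp only [expCoeff, map_sum, D.map_smul, derivation_multiset_prod]
  rw [sum_partition_sum_erase_part F fun i s => (s.map a).prod * D (a i)]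
  simp only [sum_mul, smul_mul_assoc]

theorem nsmul_expCoeff (a : ℕ → A) (m : ℕ) :
    m • expCoeff F a m = ∑ i ∈ Icc 1 m, i • (a i * expCoeff F a (m - i)) := by
  have euler (ρ : m.Partition) :
      (ρ.parts.map fun i => i • (a i * ((ρ.parts.erase i).map a).prod)).sum
        = m • (ρ.parts.map a).prod := by
    rw [Multiset.map_congr rfl fun i hi => by rw [Multiset.prod_map_erase hi], ← Multiset.sum_smul,
      ρ.parts_sum]
  have h := sum_partition_sum_erase_part F (fun i s => i • (a i * (s.map a).prod)) m
  simp only [euler, smul_comm _ (_ : ℕ)] at h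
  simpa only [expCoeff, smul_sum, mul_sum, mul_smul_comm] using h

theorem nsmul_expCoeff_succ (a : ℕ → A) (m : ℕ) :
    (m + 1) • expCoeff F a (m + 1)
      = ∑ p ∈ antidiagonal m, (p.1 + 1) • (a (p.1 + 1) * expCoeff F a p.2) := by
  rw [nsmul_expCoeff, Finset.Nat.sum_antidiagonal_eq_sum_range_succ
    fun i j => (i + 1) • (a (i + 1) * expCoeff F a j), range_eq_Ico]
  have shift := Finset.sum_Ico_add' (fun i => i • (a i * expCoeff F a (m + 1 - i))) 0 (m + 1) 1
  simp only [Nat.add_sub_add_right] at shift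
  exact shift.symm

open scoped PowerSeries in
theorem coeff_eq_expCoeff_of_derivative_eq {a : ℕ → A} {f : A⟦X⟧}
    (hf : PowerSeries.constantCoeff f = 1)
    (hderiv : d⁄dX A f = PowerSeries.mk (fun i => (i + 1) • a (i + 1)) * f) (m : ℕ) :
    PowerSeries.coeff m f = expCoeff F a m := by
  induction m using Nat.strong_induction_on with
  | _ m ih =>
    rcases m with _ | m
    · rw [PowerSeries.coeff_zero_eq_constantCoeff_apply, hf, expCoeff_zero]
    have hcoeff := congrArg (PowerSeries.coeff m) hderiv
    simp only [PowerSeries.coeff_derivative, PowerSeries.coeff_mul, PowerSeries.coeff_mk] at hcoeff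
    have hne : ((m + 1 : ℕ) : F) ≠ 0 := Nat.cast_ne_zero.2 m.succ_ne_zero
    refine smul_right_injective A hne ?_
    change ((m + 1 : ℕ) : F) • _ = ((m + 1 : ℕ) : F) • _
    rw [Nat.cast_smul_eq_nsmul, Nat.cast_smul_eq_nsmul, nsmul_expCoeff_succ, nsmul_eq_mul, mul_comm,
      Nat.cast_succ, hcoeff]
    refine sum_congr rfl fun p hp => ?_
    have hlt : p.2 < m + 1 := by have := HasAntidiagonal.mem_antidiagonal.1 hp; lia
    rw [ih p.2 hlt, smul_mul_assoc]

end ExpCoeff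

section GeometricSeries

open scoped PowerSeries

variable {F : Type*} [Field F]

/-- The geometric series `∑ uⁿ zⁿ = 1 / (1 - u z)`. -/
def geometricSeries (u : F) : F⟦X⟧ := PowerSeries.mk (u ^ ·)

theorem one_sub_mul_geometricSeries (u : F) :
    (1 - PowerSeries.C u * PowerSeries.X) * geometricSeries u = 1 := by
  ext n
  rcases n with _ | n
  · simp [geometricSeries]
  · simp [geometricSeries, sub_mul, mul_assoc, PowerSeries.coeff_succ_X_mul, pow_succ']

theorem derivative_geometricSeries (u : F) :
    d⁄dX F (geometricSeries u) = PowerSeries.C u * geometricSeries u ^ 2 := by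
  rw [(d⁄dX F).leibniz_of_mul_eq_one ((mul_comm _ _).trans (one_sub_mul_geometricSeries u))]
  simp [mul_comm]

variable {t : F} (ht : t + 1 ≠ 0)
include ht

theorem one_add_C_mul_geometricSeries_sub :
    1 + PowerSeries.C (2 * (t - 1) / (t + 1)) * (geometricSeries t - geometricSeries (-1))
      = (1 - PowerSeries.X) * (1 + PowerSeries.C t * PowerSeries.X)
        * (geometricSeries t * geometricSeries (-1)) := by
  set κ := PowerSeries.C (2 * (t - 1) / (t + 1)) with hκ_def
  have hκ : κ * (PowerSeries.C t + 1) = 2 * (PowerSeries.C t - 1) := by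
    rw [hκ_def, ← map_one (PowerSeries.C (R := F)), ← map_add, ← map_mul, div_mul_cancel₀ _ ht,
      map_mul, map_sub, map_ofNat]
  have hneg := one_sub_mul_geometricSeries (-1 : F)
  rw [map_neg, map_one] at hneg
  linear_combination (κ * geometricSeries (-1) - 1) * one_sub_mul_geometricSeries t
    - (κ + 1 - PowerSeries.C t * PowerSeries.X) * geometricSeries t * hneg
    + PowerSeries.X * geometricSeries t * geometricSeries (-1) * hκ

theorem derivative_one_add_C_mul_geometricSeries_sub :
    d⁄dX F (1 + PowerSeries.C (2 * (t - 1) / (t + 1)) * (geometricSeries t - geometricSeries (-1)))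
      = (PowerSeries.C t * geometricSeries t - geometricSeries 1
          + PowerSeries.C t * geometricSeries (-t) - geometricSeries (-1))
        * (1 + PowerSeries.C (2 * (t - 1) / (t + 1))
          * (geometricSeries t - geometricSeries (-1))) := by
  have hone := one_sub_mul_geometricSeries (1 : F)
  have hneg := one_sub_mul_geometricSeries (-t)
  rw [map_one] at hone
  rw [map_neg] at hneg
  rw [one_add_C_mul_geometricSeries_sub ht]
  simp only [Derivation.leibniz, map_sub, map_add, derivative_geometricSeries, smul_eq_mul,
    PowerSeries.derivative_X, PowerSeries.derivative_C, Derivation.map_one_eq_zero,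
    map_neg, map_one]
  linear_combination (1 + PowerSeries.C t * PowerSeries.X) * geometricSeries t
      * geometricSeries (-1) * hone
    - PowerSeries.C t * (1 - PowerSeries.X) * geometricSeries t * geometricSeries (-1) * hneg

theorem expCoeff_eq_of_natCast_mul_eq [CharZero F] {a : ℕ → F}
    (ha : ∀ i : ℕ, i * a i = (1 - (-1) ^ i) * (t ^ i - 1)) (m : ℕ) :
    expCoeff F a m
      = (if m = 0 then 1 else 0) + 2 * (t - 1) / (t + 1) * (t ^ m - (-1) ^ m) := by
  have hlog : PowerSeries.mk (fun i => (i + 1) • a (i + 1))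
      = PowerSeries.C t * geometricSeries t - geometricSeries 1
        + PowerSeries.C t * geometricSeries (-t) - geometricSeries (-1) := by
    ext i
    have hi := ha (i + 1)
    push_cast at hi
    simp only [geometricSeries, nsmul_eq_mul, map_sub, map_add, PowerSeries.coeff_mk,
      PowerSeries.coeff_C_mul, Nat.cast_add, Nat.cast_one, hi, neg_pow t, one_pow]
    ring
  rw [← coeff_eq_expCoeff_of_derivative_eq F
    (f := 1 + PowerSeries.C (2 * (t - 1) / (t + 1)) * (geometricSeries t - geometricSeries (-1)))]
  · simp [geometricSeries, PowerSeries.coeff_one]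
  · simp [geometricSeries]
  · rw [hlog, derivative_one_add_C_mul_geometricSeries_sub ht]

end GeometricSeries

section VertexOperators

variable {F : Type} [Field F]

theorem pderiv_pvar (n : OddIdx) (i : ℕ) :
    pderiv n (pvar F i) = if i = n then 1 else 0 := by
  by_cases hi : Odd i
  · rw [pvar, dif_pos hi, pderiv_X, Pi.single_apply]
    exact if_congr (by rw [Subtype.ext_iff, eq_comm]) rfl rfl
  · have hne : i ≠ n := by
      rintro rfl
      exact hi n.2
    rw [pvar, dif_neg hi, map_zero, if_neg hne]

theorem pder_smul (n : ℕ) (a : F) (f : Gam F) : pder n (a • f) = a • pder n f := by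
  unfold pder
  split_ifs <;> simp

theorem crea_of_neg (c : ℕ → F) {m : ℤ} (hm : m < 0) : crea c m = 0 := if_neg hm.not_ge

theorem cQ_of_not_odd {n : ℕ} (hn : ¬ Odd n) : cQ F n = 0 := if_neg hn

theorem crea_natCast (c : ℕ → F) (m : ℕ) :
    crea c (m : ℤ) = expCoeff F (fun i => c i • pvar F i) m := by
  rw [crea, if_pos (Int.natCast_nonneg m)]
  refine sum_congr rfl fun ρ _ => ?_
  rw [pprod, div_eq_inv_mul, mul_smul, smul_multiset_prod]

theorem crea_zero (c : ℕ → F) : crea c 0 = 1 :=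
  (crea_natCast c 0).trans (expCoeff_zero F _)

variable [CharZero F]

theorem constantCoeff_crea (c : ℕ → F) (m : ℤ) :
    constantCoeff (crea c m) = if m = 0 then 1 else 0 := by
  rcases lt_or_ge m 0 with hneg | hm
  · rw [crea_of_neg c hneg, map_zero, if_neg hneg.ne]
  lift m to ℕ using hm
  rcases eq_or_ne m 0 with rfl | hne
  · simp [crea_zero]
  have constantCoeff_pvar (i : ℕ) : constantCoeff (pvar F i) = 0 := by
    unfold pvar
    split_ifs <;> simp
  have newton := congrArg constantCoeff (nsmul_expCoeff F (fun i => c i • pvar F i) m)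
  rw [← crea_natCast] at newton
  simpa [constantCoeff_smul, constantCoeff_pvar, hne] using newton

theorem pderiv_crea (c : ℕ → F) (n : OddIdx) (m : ℤ) :
    pderiv n (crea c m) = c n • crea c (m - n) := by
  have hpos : 1 ≤ n.1 := n.2.pos
  rcases lt_or_ge m 0 with hm | hm
  · rw [crea_of_neg c hm, crea_of_neg c (by lia), map_zero, smul_zero]
  lift m to ℕ using hm
  rw [crea_natCast, derivation_expCoeff]
  simp only [Derivation.map_smul, pderiv_pvar, smul_ite, smul_zero, mul_ite, mul_zero,
    mul_smul_comm, mul_one, sum_ite_eq', mem_Icc, hpos, true_and]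
  split_ifs with hnm
  · rw [← crea_natCast, Nat.cast_sub hnm]
  · rw [crea_of_neg c (by lia), smul_zero]

theorem coeff_single_one_crea (c : ℕ → F) (r : ℕ) :
    (r.factorial : F) * coeff (Finsupp.single ⟨1, odd_one⟩ r) (crea c r) = c 1 ^ r := by
  induction r with
  | zero => simp [crea_zero]
  | succ r ih =>
    have h := congrArg (coeff (Finsupp.single ⟨1, odd_one⟩ r))
      (pderiv_crea c ⟨1, odd_one⟩ (r + 1 : ℕ))
    rw [coeff_pderiv, ← Finsupp.single_add, Finsupp.single_eq_same, coeff_smul, smul_eq_mul,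
      Nat.cast_one, Nat.cast_succ, add_sub_cancel_right] at h
    rw [Nat.factorial_succ, Nat.cast_mul, Nat.cast_succ, Nat.cast_succ]
    linear_combination (r.factorial : F) * h + c 1 * ih

theorem lt_bnd_crea {c : ℕ → F} (hc : c 1 ≠ 0) (r : ℕ) : r < bnd (crea c r) := by
  have hcoeff : coeff (Finsupp.single ⟨1, odd_one⟩ r) (crea c r) ≠ 0 :=
    right_ne_zero_of_mul <| (coeff_single_one_crea c r).trans_ne (pow_ne_zero r hc)
  have hdeg := le_totalDegree (mem_support_iff.2 hcoeff)
  rw [Finsupp.sum_single_index rfl] at hdeg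
  exact Nat.lt_succ_of_le <| (hdeg.trans (Nat.le_succ _)).trans <|
    Nat.le_mul_of_pos_right _ (Nat.succ_pos _)

section OddSupport

variable {c : ℕ → F} (hc : ∀ n, ¬ Odd n → c n = 0)
include hc

theorem pder_crea (n : ℕ) (m : ℤ) : pder n (crea c m) = c n • crea c (m - n) := by
  by_cases hn : Odd n
  · rw [pder, dif_pos hn, pderiv_crea]
  · rw [pder, dif_neg hn, hc n hn, zero_smul]

theorem foldr_pder_crea (l : List ℕ) (m : ℤ) :
    l.foldr pder (crea c m) = (l.map c).prod • crea c (m - l.sum) := by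
  induction l with
  | nil => simp
  | cons n l ih =>
    rw [List.foldr_cons, ih, pder_smul, pder_crea hc, ← mul_smul, List.map_cons, List.prod_cons,
      List.sum_cons, mul_comm, sub_sub, Nat.cast_add, add_comm (n : ℤ)]

theorem annih_crea (d : ℕ → F) (k : ℕ) (m : ℤ) :
    annih d k (crea c m) = expCoeff F (fun i => d i * c i) k • crea c (m - k) := by
  rw [annih, expCoeff, sum_smul]
  refine sum_congr rfl fun ρ _ => ?_
  rw [Dmult, foldr_pder_crea hc, ← Multiset.prod_coe, ← Multiset.map_coe, Multiset.coe_toList,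
    Multiset.sum_toList, ρ.parts_sum, ← mul_smul, Multiset.prod_map_mul, smul_eq_mul]
  congr 1
  ring

theorem vop_crea (hc1 : c 1 ≠ 0) (c' d : ℕ → F) (k : ℤ) (r : ℕ) :
    vop c' d k (crea c r) = ∑ j ∈ range (r + 1),
      expCoeff F (fun i => d i * c i) j • (crea c' (k + j) * crea c (r - j)) := by
  rw [vop, ← sum_subset (range_subset_range.2 (lt_bnd_crea hc1 r))]
  · refine sum_congr rfl fun j _ => ?_
    rw [annih_crea hc, mul_smul_comm]
  · intro j _ hj
    rw [mem_range] at hj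
    rw [annih_crea hc, crea_of_neg c (by lia), smul_zero, mul_zero]

end OddSupport

theorem cQ_one_ne_zero : cQ F 1 ≠ 0 := by simp [cQ]

end VertexOperators

theorem Gop_crea (k : ℤ) (r : ℕ) :
    Gop k (crea (cQ FF) r) = ∑ j ∈ range (r + 1),
      expCoeff FF (fun i => dG i * cQ FF i) j • (crea (cQ FF) (k + j) * crea (cQ FF) (r - j)) :=
  vop_crea (fun _ => cQ_of_not_odd) cQ_one_ne_zero _ _ _ _

theorem Gop_one (k : ℤ) : Gop k 1 = crea (cQ FF) k := by
  simpa [crea_zero, expCoeff_zero] using Gop_crea k 0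

theorem Gelem_pair (k r : ℕ) :
    Gelem [k, r] = ∑ j ∈ range (r + 1),
      expCoeff FF (fun i => dG i * cQ FF i) j • (crea (cQ FF) (k + j) * crea (cQ FF) (r - j)) := by
  change Gop k (Gop r 1) = _
  rw [Gop_one, Gop_crea]

section Form

variable {F : Type} [Field F]

variable (F) in
/-- The squared norm of the monomial `p^m` for `formQ`, as a product over the variables. -/
def monomialWeight (m : OddIdx →₀ ℕ) : F := m.prod fun i k => (i.1 / 2 : F) ^ k * k.factorial

theorem formQ_eq_sum (f g : Gam F) {s : Finset (OddIdx →₀ ℕ)} (hs : f.support ⊆ s) :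
    formQ f g = ∑ m ∈ s, f.coeff m * g.coeff m * monomialWeight F m := by
  have weight_eq (m : OddIdx →₀ ℕ) :
      (m.prod fun i k => (i.1 : F) ^ k * (k.factorial : F)) / 2 ^ (m.sum fun _ k => k)
        = monomialWeight F m := by
    rw [monomialWeight, Finsupp.prod, Finsupp.prod, Finsupp.sum, ← prod_pow_eq_pow_sum,
      ← prod_div_distrib]
    exact prod_congr rfl fun i _ => by rw [div_pow, div_mul_eq_mul_div]
  simp only [formQ, weight_eq]
  refine sum_subset hs fun m _ hm => ?_
  rw [notMem_support_iff.1 hm, zero_mul, zero_mul]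

theorem formQ_add (f f' g : Gam F) : formQ (f + f') g = formQ f g + formQ f' g := by
  rw [formQ_eq_sum f g (subset_union_left (s₂ := f'.support)),
    formQ_eq_sum f' g (subset_union_right (s₁ := f.support)), formQ_eq_sum _ g support_add,
    ← sum_add_distrib]
  exact sum_congr rfl fun m _ => by rw [coeff_add, add_mul, add_mul]

theorem formQ_smul (a : F) (f g : Gam F) : formQ (a • f) g = a * formQ f g := by
  rw [formQ_eq_sum f g subset_rfl, formQ_eq_sum _ g support_smul, mul_sum]
  exact sum_congr rfl fun m _ => by rw [coeff_smul, smul_eq_mul, mul_assoc, mul_assoc, mul_assoc]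

theorem formQ_sum {ι : Type*} (s : Finset ι) (f : ι → Gam F) (g : Gam F) :
    formQ (∑ i ∈ s, f i) g = ∑ i ∈ s, formQ (f i) g := by
  have hlin : IsLinearMap F (formQ · g) :=
    ⟨fun f f' => formQ_add f f' g, fun a f => formQ_smul a f g⟩
  exact map_sum hlin.mk' f s

theorem formQ_monomial (m : OddIdx →₀ ℕ) (a : F) (g : Gam F) :
    formQ (monomial m a) g = a * g.coeff m * monomialWeight F m := by
  rw [formQ_eq_sum _ g support_monomial_subset, sum_singleton, coeff_monomial, if_pos rfl]

theorem formQ_one (f : Gam F) : formQ f 1 = constantCoeff f := by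
  induction f using MvPolynomial.induction_on' with
  | monomial m a =>
    rw [formQ_monomial, constantCoeff_monomial, coeff_one]
    rcases eq_or_ne m 0 with rfl | hm
    · simp [monomialWeight]
    · rw [if_neg hm.symm, if_neg hm, mul_zero, zero_mul]
  | add f f' hf hf' => rw [map_add, formQ_add, hf, hf']

variable [CharZero F]

theorem monomialWeight_add_single (m : OddIdx →₀ ℕ) (n : OddIdx) :
    monomialWeight F (m + Finsupp.single n 1) = n.1 / 2 * (m n + 1) * monomialWeight F m := by
  have hn : (n.1 / 2 : F) ≠ 0 := div_ne_zero (Nat.cast_ne_zero.2 n.2.pos.ne') two_ne_zero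
  have hne : (n.1 / 2 : F) ^ m n * (m n).factorial ≠ 0 :=
    mul_ne_zero (pow_ne_zero _ hn) (Nat.cast_ne_zero.2 (Nat.factorial_ne_zero _))
  have hprod := finsupp_prod_add_single_one (fun (i : OddIdx) k => (i.1 / 2 : F) ^ k * k.factorial)
    (fun _ => by simp) m n
  refine mul_left_cancel₀ hne (hprod.trans ?_)
  rw [Nat.factorial_succ, monomialWeight]
  push_cast
  ring

theorem formQ_X_mul (n : OddIdx) (f g : Gam F) :
    formQ f (X n * g) = n.1 / 2 * formQ (pderiv n f) g := by
  induction f using MvPolynomial.induction_on' with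
  | monomial m a =>
    rw [pderiv_monomial, formQ_monomial, formQ_monomial, mul_comm (X n)]
    rcases Nat.eq_zero_or_pos (m n) with hn | hn
    · rw [coeff_mul_X', if_neg (Finsupp.notMem_support_iff.2 hn), hn]
      simp
    · obtain ⟨u, rfl⟩ : ∃ u, m = u + Finsupp.single n 1 :=
        ⟨_, (tsub_add_cancel_of_le (Finsupp.single_le_iff.2 hn)).symm⟩
      rw [coeff_mul_X, add_tsub_cancel_right, monomialWeight_add_single, Finsupp.add_apply,
        Finsupp.single_eq_same, Nat.cast_succ]
      ring
  | add f f' hf hf' => rw [map_add, formQ_add, formQ_add, hf, hf', mul_add]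

end Form

section SubpartitionPolynomial

theorem Dpoly_eq_prod (m : List ℕ) :
    Dpoly m = (m.map fun n => (1 + Polynomial.X ^ n : Polynomial ℚ)).prod := by
  have hprod : (m.map fun n => (1 + Polynomial.X ^ n : Polynomial ℚ)).prod
      = ∏ j : Fin m.length, (1 + Polynomial.X ^ m.get j) := by
    conv_lhs => rw [← List.ofFn_get m, List.map_ofFn, List.prod_ofFn]
    rfl
  rw [hprod, prod_one_add, powerset_univ, Dpoly]
  exact sum_congr rfl fun S _ => (prod_pow_eq_pow_sum S _ _).symm

theorem Dpoly_cons (n : ℕ) (m : List ℕ) :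
    Dpoly (n :: m) = Dpoly m + Polynomial.X ^ n * Dpoly m := by
  rw [Dpoly_eq_prod, Dpoly_eq_prod, List.map_cons, List.prod_cons, add_mul, one_mul]

theorem coeff_Dpoly (m : List ℕ) (i : ℕ) :
    (Dpoly m).coeff i = #{S : Finset (Fin m.length) | ∑ j ∈ S, m.get j = i} := by
  simp only [Dpoly, Polynomial.finsetSum_coeff, Polynomial.coeff_X_pow, eq_comm (a := i), sum_boole]

theorem natDegree_Dpoly_le (m : List ℕ) : (Dpoly m).natDegree ≤ m.sum := by
  induction m with
  | nil => simp [Dpoly_eq_prod]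
  | cons n m ih =>
    rw [Dpoly_cons, List.sum_cons]
    refine Polynomial.natDegree_add_le_of_degree_le (ih.trans (Nat.le_add_left _ n)) ?_
    exact Polynomial.natDegree_mul_le_of_le (Polynomial.natDegree_X_pow_le n) ih

theorem coeff_Dpoly_symm {m : List ℕ} {a b : ℕ} (hab : a + b = m.sum) :
    (Dpoly m).coeff a = (Dpoly m).coeff b := by
  have hsum (S : Finset (Fin m.length)) : ∑ j ∈ Sᶜ, m.get j + ∑ j ∈ S, m.get j = m.sum := by
    rw [sum_compl_add_sum, ← List.sum_ofFn, List.ofFn_get]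
  rw [coeff_Dpoly, coeff_Dpoly]
  refine congrArg Nat.cast (card_nbij' compl compl ?_ ?_ (fun S _ => compl_compl S)
    fun S _ => compl_compl S)
  all_goals
    intro S hS
    have := hsum S
    simp only [coe_filter, mem_univ, true_and, Set.mem_ofPred_eq] at hS ⊢
    lia

variable {F : Type} [Field F] [CharZero F]

theorem formQ_crea_mul_crea_X_mul (n : OddIdx) (a b : ℤ) (g : Gam F) :
    formQ (crea (cQ F) a * crea (cQ F) b) (X n * g)
      = formQ (crea (cQ F) (a - n) * crea (cQ F) b) g
        + formQ (crea (cQ F) a * crea (cQ F) (b - n)) g := by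
  have hn : (n.1 : F) ≠ 0 := Nat.cast_ne_zero.2 n.2.pos.ne'
  rw [formQ_X_mul, pderiv_mul, pderiv_crea, pderiv_crea, cQ, if_pos n.2, smul_mul_assoc,
    mul_smul_comm, formQ_add, formQ_smul, formQ_smul]
  field_simp

/- By adjointness a factor `p_n` acts on `q_a q_b` as the derivation `(n/2) ∂/∂p_n`, which sends
`q_a` to `q_{a-n}`: each part of `μ` is allotted either to `a` or to `b`. -/
theorem formQ_crea_mul_crea {m : List ℕ} (hm : ∀ n ∈ m, Odd n) (a : ℕ) {b : ℤ}
    (hab : a + b = m.sum) :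
    formQ (crea (cQ F) a * crea (cQ F) b) (pprod F m) = (Dpoly m).coeff a := by
  induction m generalizing a b with
  | nil =>
    have hb : b = -a := by simpa [add_eq_zero_iff_neg_eq, eq_comm] using hab
    have hpprod : pprod F (([] : List ℕ) : Multiset ℕ) = 1 := by simp [pprod]
    rw [hpprod, formQ_one, map_mul, constantCoeff_crea, constantCoeff_crea, hb, Dpoly_eq_prod]
    by_cases ha : a = 0 <;> simp [Polynomial.coeff_one, ha]
  | cons n m ih =>
    have hn : Odd n := hm n List.mem_cons_self
    have ih {a : ℕ} {b : ℤ} := @ih (fun i hi => hm i (List.mem_cons_of_mem n hi)) a b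
    have hpprod : pprod F ((n :: m : List ℕ) : Multiset ℕ) = X ⟨n, hn⟩ * pprod F m := by
      simp [pprod, pvar, hn]
    rw [List.sum_cons, Nat.cast_add] at hab
    rw [hpprod, formQ_crea_mul_crea_X_mul, Dpoly_cons, Polynomial.coeff_add,
      Polynomial.coeff_X_pow_mul', ih (b := b - n) (by lia), Rat.cast_add, add_comm]
    split_ifs with hna
    · rw [← Nat.cast_sub hna, ih (by lia)]
    · rw [crea_of_neg _ (by lia), zero_mul, ← zero_smul F 0, formQ_smul, zero_mul, Rat.cast_zero]

end SubpartitionPolynomial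

theorem plusPart_eq_sum {k N : ℕ} {P : Polynomial ℚ} (hP : P.natDegree < k + N) :
    plusPart k P
      = ∑ j ∈ range N, Polynomial.C (P.coeff (k + j)) * Polynomial.X ^ j := by
  rw [plusPart, sum_subset (range_subset_range.2 hP), sum_range_add, sum_eq_zero, zero_add]
  · exact sum_congr rfl fun j _ => by
      rw [if_pos (Nat.le_add_right k j), Nat.add_sub_cancel_left]
  · intro i hi
    rw [if_neg (mem_range.1 hi).not_ge]
  · intro i _ hi
    have hdeg : P.natDegree < i := by simpa using hi
    simp [Polynomial.coeff_eq_zero_of_natDegree_lt hdeg]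

theorem tt_add_one_ne_zero : tt + 1 ≠ 0 := by
  have h : tt + 1 = algebraMap (Polynomial ℚ) FF (Polynomial.X + Polynomial.C 1) := by
    rw [map_add, RatFunc.algebraMap_X, map_one, map_one, tt]
  rw [h]
  exact (map_ne_zero_iff _ (RatFunc.algebraMap_injective ℚ)).2 (Polynomial.X_add_C_ne_zero 1)

theorem algebraMap_C_eq_ratCast (a : ℚ) : algebraMap (Polynomial ℚ) FF (Polynomial.C a) = a := by
  rw [RatFunc.algebraMap_C, eq_ratCast]

theorem natCast_mul_dG_mul_cQ (i : ℕ) :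
    i * (dG i * cQ FF i) = (1 - (-1) ^ i) * (tt ^ i - 1) := by
  by_cases hi : Odd i
  · have hne : (i : FF) ≠ 0 := Nat.cast_ne_zero.2 hi.pos.ne'
    rw [dG, cQ, if_pos hi, if_pos hi, hi.neg_one_pow]
    field_simp
    ring
  · rw [dG, if_neg hi, (Nat.not_odd_iff_even.1 hi).neg_one_pow]
    ring

theorem expCoeff_dG_mul_cQ (j : ℕ) :
    expCoeff FF (fun i => dG i * cQ FF i) j
      = (if j = 0 then 1 else 0) + 2 * (tt - 1) / (tt + 1) * (tt ^ j - (-1) ^ j) :=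
  expCoeff_eq_of_natCast_mul_eq tt_add_one_ne_zero natCast_mul_dG_mul_cQ j

theorem Ypoly_pair (k r : ℕ) {m : List ℕ} (hmo : ∀ n ∈ m, Odd n) (hms : m.sum = k + r) :
    Ypoly [k, r] m = ∑ j ∈ range (r + 1),
      expCoeff FF (fun i => dG i * cQ FF i) j * (Dpoly m).coeff (k + j) := by
  rw [Ypoly, Gelem_pair, formQ_sum]
  refine sum_congr rfl fun j _ => ?_
  have hweight : ((k + j : ℕ) : ℤ) + (r - j) = m.sum := by
    rw [hms]
    push_cast
    ring
  rw [formQ_smul, ← Nat.cast_add, formQ_crea_mul_crea hmo _ hweight]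

theorem algebraMap_plusPart {k N : ℕ} {P : Polynomial ℚ} (hP : P.natDegree < k + N) :
    algebraMap (Polynomial ℚ) FF (plusPart k P) = ∑ j ∈ range N, P.coeff (k + j) * tt ^ j := by
  simp only [plusPart_eq_sum hP, map_sum, map_mul, map_pow, algebraMap_C_eq_ratCast,
    RatFunc.algebraMap_X, tt]

theorem algebraMap_C_eval_plusPart {k N : ℕ} {P : Polynomial ℚ} (hP : P.natDegree < k + N) (x : ℚ) :
    algebraMap (Polynomial ℚ) FF (Polynomial.C ((plusPart k P).eval x))
      = ∑ j ∈ range N, P.coeff (k + j) * (x : FF) ^ j := by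
  simp [plusPart_eq_sum hP, Polynomial.eval_finsetSum]

theorem Y_two_row_general (k r : ℕ) (m : List ℕ) (hmo : ∀ x ∈ m, Odd x) (hms : m.sum = k + r) :
    Ypoly [k, r] (↑m : Multiset ℕ)
      = (2 * (tt - 1) / (tt + 1)) *
          (algebraMap (Polynomial ℚ) FF (plusPart k (Dpoly m))
            - algebraMap (Polynomial ℚ) FF
                (Polynomial.C ((plusPart k (Dpoly m)).eval (-1))))
        + ((Finset.univ.filter fun S : Finset (Fin m.length) =>
              ∑ j ∈ S, m.get j = r).card : FF) := by
  have hdeg : (Dpoly m).natDegree < k + (r + 1) := by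
    have := natDegree_Dpoly_le m
    lia
  have hcard : (#{S : Finset (Fin m.length) | ∑ j ∈ S, m.get j = r} : FF) = (Dpoly m).coeff k := by
    rw [coeff_Dpoly_symm hms.symm, coeff_Dpoly, Rat.cast_natCast]
  rw [hcard, Ypoly_pair k r hmo hms, algebraMap_plusPart hdeg, algebraMap_C_eval_plusPart hdeg]
  simp only [expCoeff_dG_mul_cQ, add_mul, ite_mul, one_mul, zero_mul, sum_add_distrib,
    sum_ite_eq', mem_range, Nat.succ_pos, if_true, add_zero]
  rw [← sum_sub_distrib, mul_sum, add_comm]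
  congr 1
  refine sum_congr rfl fun j _ => ?_
  push_cast
  ring

theorem Y_two_row (k r : ℕ) (h1 : r < k) (h2 : 0 < r) (m : List ℕ)
    (hmo : ∀ x ∈ m, Odd x) (hms : m.sum = k + r) :
    Ypoly [k, r] (↑m : Multiset ℕ)
      = (2 * (tt - 1) / (tt + 1)) *
          (algebraMap (Polynomial ℚ) FF (plusPart k (Dpoly m))
            - algebraMap (Polynomial ℚ) FF
                (Polynomial.C ((plusPart k (Dpoly m)).eval (-1))))
        + ((Finset.univ.filter fun S : Finset (Fin m.length) =>
              ∑ j ∈ S, m.get j = r).card : FF) :=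
  Y_two_row_general k r m hmo hms

end
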